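/- Assume the nonatomicity assumption and fix an integer k ∈ {1,…,L−1}. Define G(t) = ∑_{ℓ=1}^L μ({x : p_ℓ(x) ≥ t}), let G^{-1} be its generalized inverse, and let Γ*_{k̄}(x) = {ℓ ∈ Fin L : p_ℓ(x) ≥ G^{-1}(k)} be the average-size-control classifier with budget k̄ = k. Then for every top-k classifier Γ_k with respect to p, one has error(Γ*_{k̄}) ≤ error(Γ_k); that is, the average size control solution with budget k achieves an error rate no larger than that of the top-k classifier, since the top-k classifier has average size exactly k and is hence feasible for the average size constraint. -/

import Mathlib

open MeasureTheory Finset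

/-!
Thresholding the class probabilities at `t` minimises the penalised risk `error + t * size`, because
it keeps exactly the classes with `0 ≤ p_ℓ - t`. Hence, if `0 ≤ t`, it has the smallest error among
all classifiers that are not larger on average. The size `G t` of this threshold classifier is
left-continuous in `t`, so `k ≤ G (G⁻¹ k)`, and the threshold `G⁻¹ k` beats every classifier of
average size at most `k`.
-/

/-- The generalized inverse `F⁻¹` of a nonincreasing function `F : ℝ → ℝ`. It is `0`, the value of
`sInf` on `∅` and on sets unbounded below, where the infimum is not a real number. -/
noncomputable def generalizedInverse (F : ℝ → ℝ) (u : ℝ) : ℝ :=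
  sInf {t | F t ≤ u}

theorem le_apply_generalizedInverse {F : ℝ → ℝ} {u : ℝ} (hbdd : BddBelow {t | F t ≤ u})
    (hF : ContinuousWithinAt F (Set.Iio (generalizedInverse F u)) (generalizedInverse F u)) :
    u ≤ F (generalizedInverse F u) := by
  refine ge_of_tendsto hF (eventually_mem_nhdsWithin.mono fun t ht => ?_)
  by_contra! h
  exact (csInf_le hbdd h.le).not_gt ht

theorem sum_le_sum_filter_nonneg {ι : Type*} {s t : Finset ι} (hst : s ⊆ t) (f : ι → ℝ) :
    ∑ i ∈ s, f i ≤ ∑ i ∈ t with 0 ≤ f i, f i := by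
  calc ∑ i ∈ s, f i ≤ ∑ i ∈ s, max (f i) 0 := sum_le_sum fun i _ => le_max_left _ _
    _ ≤ ∑ i ∈ t, max (f i) 0 := sum_le_sum_of_subset_of_nonneg hst fun i _ _ => le_max_right _ _
    _ = ∑ i ∈ t with 0 ≤ f i, f i := by
      rw [sum_filter]
      exact sum_congr rfl fun i _ => by grind

theorem continuousWithinAt_Iio_measureReal_le {α : Type*} [MeasurableSpace α] {μ : Measure α}
    [IsFiniteMeasure μ] {f : α → ℝ} (hf : AEMeasurable f μ) (a : ℝ) :
    ContinuousWithinAt (fun t => μ.real {x | t ≤ f x}) (Set.Iio a) a := by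
  have hInter : ⋂ t < a, {x | t ≤ f x} = {x | a ≤ f x} := by
    ext x
    simpa using forall_lt_imp_le_iff_le_of_dense
  -- Mathlib states continuity from above for right limits; order duality gives the left limit.
  have h := tendsto_measure_biInter_gt (ι := ℝᵒᵈ) (μ := μ) (s := fun t => {x | t.ofDual ≤ f x})
    (a := OrderDual.toDual a) (fun _ _ => nullMeasurableSet_le aemeasurable_const hf)
    (fun _ _ _ hij x (hx : _ ≤ f x) => (OrderDual.ofDual_le_ofDual.2 hij).trans hx)
    ⟨OrderDual.toDual (a - 1), sub_one_lt a, measure_ne_top _ _⟩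
  refine (ENNReal.tendsto_toReal (measure_ne_top _ _)).comp ?_
  rw [← hInter]
  exact h

section Classifiers

variable {𝒳 ι : Type*} [MeasurableSpace 𝒳] {μ : Measure 𝒳}

/-- The average size of a set-valued classifier `Γ`. -/
noncomputable def averageSize (μ : Measure 𝒳) (Γ : 𝒳 → Finset ι) : ℝ :=
  ∫ x, (#(Γ x) : ℝ) ∂μ

/-- The error rate `P(Y ∉ Γ(X))` of a set-valued classifier `Γ`, expressed through the law `μ` of
`X` and the conditional class probabilities `p`. -/
noncomputable def errorRate (μ : Measure 𝒳) (p : 𝒳 → ι → ℝ) (Γ : 𝒳 → Finset ι) : ℝ :=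
  ∫ x, (1 - ∑ ℓ ∈ Γ x, p x ℓ) ∂μ

/-- The classifier `Γ(x) = {ℓ | t ≤ p_ℓ(x)}` that thresholds the class probabilities at `t`. -/
noncomputable def thresholdClassifier [Fintype ι] (p : 𝒳 → ι → ℝ) (t : ℝ) (x : 𝒳) : Finset ι :=
  {ℓ | t ≤ p x ℓ}

/-- The function `G(t) = ∑_ℓ μ(p_ℓ ≥ t)`, whose generalized inverse turns a size budget into a
threshold. -/
noncomputable def tailSum [Fintype ι] (μ : Measure 𝒳) (p : 𝒳 → ι → ℝ) (t : ℝ) : ℝ :=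
  ∑ ℓ, μ.real {x | t ≤ p x ℓ}

variable {p : 𝒳 → ι → ℝ} {Γ : 𝒳 → Finset ι}

theorem averageSize_of_card_eq [IsProbabilityMeasure μ] {k : ℕ} (hΓ : ∀ x, #(Γ x) = k) :
    averageSize μ Γ = k := by
  simp [averageSize, hΓ]

theorem integrable_sum_mem [Finite ι] (hΓ : ∀ ℓ, NullMeasurableSet {x | ℓ ∈ Γ x} μ)
    (hp : ∀ ℓ, Integrable (fun x => p x ℓ) μ) :
    Integrable (fun x => ∑ ℓ ∈ Γ x, p x ℓ) μ := by
  classical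
  have := Fintype.ofFinite ι
  have hsum : (fun x => ∑ ℓ ∈ Γ x, p x ℓ) =
      fun x => ∑ ℓ, {x | ℓ ∈ Γ x}.indicator (fun x => p x ℓ) x := by
    ext x
    simp [Set.indicator_apply]
  rw [hsum]
  exact integrable_finsetSum _ fun ℓ _ => (hp ℓ).indicator₀ (hΓ ℓ)

theorem integrable_card [Finite ι] [IsFiniteMeasure μ]
    (hΓ : ∀ ℓ, NullMeasurableSet {x | ℓ ∈ Γ x} μ) :
    Integrable (fun x => (#(Γ x) : ℝ)) μ := by
  simpa using integrable_sum_mem (p := fun _ _ => 1) hΓ fun _ => integrable_const _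

theorem errorRate_add_mul_averageSize [Finite ι] [IsFiniteMeasure μ]
    (hΓ : ∀ ℓ, NullMeasurableSet {x | ℓ ∈ Γ x} μ) (hp : ∀ ℓ, Integrable (fun x => p x ℓ) μ)
    (t : ℝ) :
    errorRate μ p Γ + t * averageSize μ Γ = ∫ x, (1 - ∑ ℓ ∈ Γ x, (p x ℓ - t)) ∂μ := by
  have herror : Integrable (fun x => 1 - ∑ ℓ ∈ Γ x, p x ℓ) μ :=
    (integrable_const 1).sub (integrable_sum_mem hΓ hp)
  rw [errorRate, averageSize, ← integral_const_mul,
    ← integral_add herror ((integrable_card hΓ).const_mul t)]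
  congr with x
  rw [sum_sub_distrib, sum_const, nsmul_eq_mul]
  ring

variable [Fintype ι]

theorem averageSize_eq_sum_measureReal [IsFiniteMeasure μ]
    (hΓ : ∀ ℓ, NullMeasurableSet {x | ℓ ∈ Γ x} μ) :
    averageSize μ Γ = ∑ ℓ, μ.real {x | ℓ ∈ Γ x} := by
  classical
  have hcard (x : 𝒳) : (#(Γ x) : ℝ) = ∑ ℓ, {x | ℓ ∈ Γ x}.indicator (fun _ => (1 : ℝ)) x := by
    simp [Set.indicator_apply]
  simp only [averageSize, hcard]
  rw [integral_finsetSum _ fun ℓ _ => (integrable_const 1).indicator₀ (hΓ ℓ)]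
  simp [integral_indicator₀ (hΓ _)]

theorem nullMeasurableSet_mem_thresholdClassifier (hp : ∀ ℓ, AEMeasurable (fun x => p x ℓ) μ)
    (t : ℝ) (ℓ : ι) : NullMeasurableSet {x | ℓ ∈ thresholdClassifier p t x} μ := by
  simpa [thresholdClassifier] using nullMeasurableSet_le aemeasurable_const (hp ℓ)

theorem averageSize_thresholdClassifier [IsFiniteMeasure μ]
    (hp : ∀ ℓ, AEMeasurable (fun x => p x ℓ) μ) (t : ℝ) :
    averageSize μ (thresholdClassifier p t) = tailSum μ p t := by
  rw [averageSize_eq_sum_measureReal (nullMeasurableSet_mem_thresholdClassifier hp t)]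
  simp [tailSum, thresholdClassifier]

theorem errorRate_add_mul_averageSize_thresholdClassifier_le [IsFiniteMeasure μ]
    (hΓ : ∀ ℓ, NullMeasurableSet {x | ℓ ∈ Γ x} μ) (hp : ∀ ℓ, Integrable (fun x => p x ℓ) μ)
    (t : ℝ) :
    errorRate μ p (thresholdClassifier p t) + t * averageSize μ (thresholdClassifier p t) ≤
      errorRate μ p Γ + t * averageSize μ Γ := by
  have hthr := nullMeasurableSet_mem_thresholdClassifier (fun ℓ => (hp ℓ).aemeasurable) t
  have hpt (ℓ : ι) : Integrable (fun x => p x ℓ - t) μ := (hp ℓ).sub (integrable_const t)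
  rw [errorRate_add_mul_averageSize hthr hp, errorRate_add_mul_averageSize hΓ hp]
  refine integral_mono ((integrable_const 1).sub (integrable_sum_mem hthr hpt))
    ((integrable_const 1).sub (integrable_sum_mem hΓ hpt)) fun x => sub_le_sub_left ?_ 1
  simpa [thresholdClassifier] using sum_le_sum_filter_nonneg (subset_univ (Γ x)) (p x · - t)

theorem errorRate_thresholdClassifier_le [IsFiniteMeasure μ]
    (hΓ : ∀ ℓ, NullMeasurableSet {x | ℓ ∈ Γ x} μ) (hp : ∀ ℓ, Integrable (fun x => p x ℓ) μ)
    {t : ℝ} (ht : 0 ≤ t) (hsize : averageSize μ Γ ≤ tailSum μ p t) :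
    errorRate μ p (thresholdClassifier p t) ≤ errorRate μ p Γ := by
  have hrisk := errorRate_add_mul_averageSize_thresholdClassifier_le hΓ hp t
  rw [averageSize_thresholdClassifier fun ℓ => (hp ℓ).aemeasurable] at hrisk
  linarith [mul_le_mul_of_nonneg_left hsize ht]

theorem continuousWithinAt_Iio_tailSum [IsFiniteMeasure μ]
    (hp : ∀ ℓ, AEMeasurable (fun x => p x ℓ) μ) (t : ℝ) :
    ContinuousWithinAt (tailSum μ p) (Set.Iio t) t :=
  tendsto_finsetSum _ fun ℓ _ => continuousWithinAt_Iio_measureReal_le (hp ℓ) t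

theorem tailSum_of_nonpos (hp0 : ∀ x ℓ, 0 ≤ p x ℓ) {t : ℝ} (ht : t ≤ 0) :
    tailSum μ p t = Fintype.card ι * μ.real Set.univ := by
  simp [tailSum, fun x ℓ => ht.trans (hp0 x ℓ)]

theorem zero_mem_lowerBounds_tailSum_le (hp0 : ∀ x ℓ, 0 ≤ p x ℓ) {u : ℝ}
    (hu : u < Fintype.card ι * μ.real Set.univ) :
    0 ∈ lowerBounds {t | tailSum μ p t ≤ u} := by
  intro t ht
  by_contra! hneg
  exact ht.not_gt (tailSum_of_nonpos hp0 hneg.le ▸ hu)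

theorem integrable_of_nonneg_of_sum_eq_one [IsFiniteMeasure μ] (hp : Measurable p)
    (hp0 : ∀ x ℓ, 0 ≤ p x ℓ) (hpsum : ∀ x, ∑ ℓ, p x ℓ = 1) (ℓ : ι) :
    Integrable (fun x => p x ℓ) μ := by
  refine .of_bound (measurable_pi_iff.1 hp ℓ).aestronglyMeasurable 1 (.of_forall fun x => ?_)
  rw [Real.norm_of_nonneg (hp0 x ℓ), ← hpsum x]
  exact single_le_sum (fun m _ => hp0 x m) (mem_univ ℓ)

theorem average_size_control_beats_topK_general [IsProbabilityMeasure μ] (hp : Measurable p)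
    (hp0 : ∀ x ℓ, 0 ≤ p x ℓ) (hpsum : ∀ x, ∑ ℓ, p x ℓ = 1) {u : ℝ} (hu : u < Fintype.card ι)
    (hΓ : ∀ ℓ, NullMeasurableSet {x | ℓ ∈ Γ x} μ) (hsize : averageSize μ Γ ≤ u) :
    errorRate μ p (thresholdClassifier p (generalizedInverse (tailSum μ p) u)) ≤
      errorRate μ p Γ := by
  have hint := integrable_of_nonneg_of_sum_eq_one (μ := μ) hp hp0 hpsum
  have hlower : 0 ∈ lowerBounds {t | tailSum μ p t ≤ u} :=
    zero_mem_lowerBounds_tailSum_le hp0 (by simpa using hu)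
  have hbudget : u ≤ tailSum μ p (generalizedInverse (tailSum μ p) u) :=
    le_apply_generalizedInverse ⟨0, hlower⟩
      (continuousWithinAt_Iio_tailSum (fun ℓ => (hint ℓ).aemeasurable) _)
  exact errorRate_thresholdClassifier_le hΓ hint (Real.sInf_nonneg hlower) (hsize.trans hbudget)

end Classifiers

/-- under nonatomicity, the average-size-control classifier with
budget k̄ = k achieves an error rate no larger than that of any top-k
classifier. -/
theorem average_size_control_beats_topK
    {𝒳 : Type*} [m𝒳 : MeasurableSpace 𝒳] (μ : Measure 𝒳) [IsProbabilityMeasure μ]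
    (L : ℕ) (hL : 1 ≤ L)
    (p : 𝒳 → Fin L → ℝ) (hp : Measurable p)
    (hp0 : ∀ x ℓ, 0 ≤ p x ℓ) (hpsum : ∀ x, ∑ ℓ, p x ℓ = 1)
    (hatom : ∀ (ℓ : Fin L) (t : ℝ), μ {x | p x ℓ = t} = 0)
    (k : ℕ) (hk1 : 1 ≤ k) (hkL : k < L)
    (G : ℝ → ℝ) (hG : G = fun t => ∑ ℓ : Fin L, (μ {x | t ≤ p x ℓ}).toReal)
    (θ : ℝ) (hθ : θ = sInf {t : ℝ | G t ≤ (k : ℝ)})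
    (Γstar : 𝒳 → Finset (Fin L))
    (hΓstar : ∀ x, Γstar x = Finset.univ.filter (fun ℓ => θ ≤ p x ℓ))
    (Γk : 𝒳 → Finset (Fin L))
    (hΓkMeas : @Measurable 𝒳 (Finset (Fin L)) m𝒳 ⊤ Γk)
    (hΓkCard : ∀ x, (Γk x).card = k)
    (hΓkTop : ∀ x, ∀ ℓ ∈ Γk x, ∀ m, m ∉ Γk x → p x m ≤ p x ℓ) :
    ∫ x, (1 - ∑ ℓ ∈ Γstar x, p x ℓ) ∂μ ≤ ∫ x, (1 - ∑ ℓ ∈ Γk x, p x ℓ) ∂μ := by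
  obtain rfl : Γstar = thresholdClassifier p θ := funext hΓstar
  subst hθ hG
  exact average_size_control_beats_topK_general hp hp0 hpsum (by simpa using hkL)
    (fun ℓ => (hΓkMeas (t := {s | ℓ ∈ s}) trivial).nullMeasurableSet)
    (averageSize_of_card_eq hΓkCard).le
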